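/- arXiv:1211.1174 — 5 statements merged into one kernel-verified Lean document; each statement's English description precedes it below -/
import Mathlib

section
/- The map ν ↦ c_{ν,1} = Γ((ν+1)/2) / ((πν)^{1/2} Γ(ν/2)) is strictly monotonically increasing on (0, ∞). -/
open Real Set

/-- Squared ratio `Γ(x+1/2)² / (x Γ(x)²)`. -/
noncomputable def auxH (x : ℝ) : ℝ := Real.Gamma (x + 1 / 2) ^ 2 / (x * Real.Gamma x ^ 2)

lemma auxH_pos {x : ℝ} (hx : 0 < x) : 0 < auxH x := by
  have h1 := Real.Gamma_pos_of_pos hx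
  have h2 := Real.Gamma_pos_of_pos (show 0 < x + 1 / 2 by linarith)
  unfold auxH
  positivity

lemma gamma_half_sq_le {x : ℝ} (hx : 0 < x) :
    Real.Gamma (x + 1 / 2) ^ 2 ≤ x * Real.Gamma x ^ 2 := by
  have h1 := Real.Gamma_pos_of_pos hx
  have h3 := Real.Gamma_pos_of_pos (show 0 < x + 1 by linarith)
  have h2 := Real.Gamma_pos_of_pos (show 0 < x + 1 / 2 by linarith)
  have h := Real.Gamma_mul_add_mul_le_rpow_Gamma_mul_rpow_Gamma hx
    (show 0 < x + 1 by linarith) (show (0 : ℝ) < 1 / 2 by norm_num)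
    (show (0 : ℝ) < 1 / 2 by norm_num) (by norm_num)
  rw [show 1 / 2 * x + 1 / 2 * (x + 1) = x + 1 / 2 by ring, ← Real.sqrt_eq_rpow,
    ← Real.sqrt_eq_rpow] at h
  calc Real.Gamma (x + 1 / 2) ^ 2
      ≤ (√(Real.Gamma x) * √(Real.Gamma (x + 1))) ^ 2 := pow_le_pow_left₀ h2.le h 2
    _ = x * Real.Gamma x ^ 2 := by
      rw [mul_pow, Real.sq_sqrt h1.le, Real.sq_sqrt h3.le, Real.Gamma_add_one hx.ne']
      ring

lemma auxH_le_one {x : ℝ} (hx : 0 < x) : auxH x ≤ 1 := by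
  have h1 := Real.Gamma_pos_of_pos hx
  unfold auxH
  rw [div_le_one (by positivity)]
  exact gamma_half_sq_le hx

lemma auxH_ge {x : ℝ} (hx : 0 < x) : x / (x + 1 / 2) ≤ auxH x := by
  have h1 := Real.Gamma_pos_of_pos hx
  have h := gamma_half_sq_le (show 0 < x + 1 / 2 by linarith)
  rw [show x + 1 / 2 + 1 / 2 = x + 1 by ring, Real.Gamma_add_one hx.ne'] at h
  unfold auxH
  rw [div_le_div_iff₀ (by positivity) (by positivity)]
  nlinarith

lemma auxH_succ {x : ℝ} (hx : 0 < x) :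
    auxH (x + 1) = auxH x * (1 + 1 / (4 * (x * (x + 1)))) := by
  have h1 := Real.Gamma_pos_of_pos hx
  unfold auxH
  rw [show x + 1 + 1 / 2 = (x + 1 / 2) + 1 by ring, Real.Gamma_add_one hx.ne',
    Real.Gamma_add_one (show x + 1 / 2 ≠ 0 by linarith)]
  have : x + 1 ≠ 0 := by linarith
  generalize Real.Gamma (x + 1 / 2) = G
  field_simp
  ring

lemma auxH_step {x y : ℝ} (hx : 0 < x) (hxy : x < y) :
    auxH x / auxH y < auxH (x + 1) / auxH (y + 1) := by
  have hy : 0 < y := hx.trans hxy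
  have hX := auxH_pos hx
  have hY := auxH_pos hy
  rw [auxH_succ hx, auxH_succ hy, div_lt_div_iff₀ hY (by positivity)]
  have : 1 / (4 * (y * (y + 1))) < 1 / (4 * (x * (x + 1))) := by
    apply one_div_lt_one_div_of_lt (by positivity)
    nlinarith
  have h2 := mul_pos hX hY
  nlinarith

lemma auxH_lt {x y : ℝ} (hx : 0 < x) (hxy : x < y) : auxH x < auxH y := by
  have hy : 0 < y := hx.trans hxy
  have hmono : Monotone (fun n : ℕ => auxH (x + n) / auxH (y + n)) := by
    apply monotone_nat_of_le_succ
    intro n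
    have := auxH_step (show 0 < x + n by positivity) (show x + n < y + n by linarith)
    push_cast
    rw [← add_assoc, ← add_assoc]
    exact this.le
  have hb : ∀ n : ℕ, auxH (x + n) / auxH (y + n) ≤ 1 + (1 / 2) / (y + n) := by
    intro n
    have hyn : 0 < y + n := by positivity
    have h1 := auxH_le_one (show 0 < x + n by positivity)
    have h2 := auxH_ge hyn
    have h3 : 0 < (y + n) / (y + n + 1 / 2) := by positivity
    calc auxH (x + n) / auxH (y + n) ≤ 1 / ((y + n) / (y + n + 1 / 2)) := by gcongr
      _ = _ := by field_simp
  have hlim : Filter.Tendsto (fun n : ℕ => 1 + (1 / 2) / (y + n)) Filter.atTop (nhds 1) := by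
    have h0 : Filter.Tendsto (fun n : ℕ => y + (n : ℝ)) Filter.atTop Filter.atTop :=
      Filter.tendsto_atTop_add_const_left _ _ tendsto_natCast_atTop_atTop
    simpa using (h0.const_div_atTop (1 / 2)).const_add 1
  have h1 : auxH (x + 1) / auxH (y + 1) ≤ 1 := by
    apply ge_of_tendsto hlim
    filter_upwards [Filter.eventually_ge_atTop 1] with n hn
    have := hmono hn
    simp only [Nat.cast_one] at this
    exact this.trans (hb n)
  have h := (auxH_step hx hxy).trans_le h1
  rwa [div_lt_one (auxH_pos hy)] at h

lemma mode_sq {ν : ℝ} (hν : 0 < ν) :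
    (Real.Gamma ((ν + 1) / 2) / ((Real.pi * ν) ^ ((1 : ℝ) / 2) * Real.Gamma (ν / 2))) ^ 2
      = auxH (ν / 2) / (2 * Real.pi) := by
  have h1 := Real.Gamma_pos_of_pos (show 0 < ν / 2 by positivity)
  have hp := Real.pi_pos
  rw [← Real.sqrt_eq_rpow, div_pow, mul_pow, Real.sq_sqrt (by positivity)]
  unfold auxH
  rw [show (ν + 1) / 2 = ν / 2 + 1 / 2 by ring]
  generalize Real.Gamma (ν / 2 + 1 / 2) = G
  field_simp

/-- The Student t value at the mode in dimension 1,
`c_{ν,1} = Γ((ν+1)/2) / ((πν)^{1/2} Γ(ν/2))`,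
is strictly monotonically increasing on `(0, ∞)`. -/
theorem studentT_mode_dim_one_strictMonoOn :
    StrictMonoOn
      (fun ν : ℝ => Real.Gamma ((ν + 1) / 2) /
        ((Real.pi * ν) ^ ((1 : ℝ) / 2) * Real.Gamma (ν / 2)))
      (Set.Ioi (0 : ℝ)) := by
  intro a ha b hb hab
  have ha : 0 < a := ha
  have hb : 0 < b := hb
  have hp := Real.pi_pos
  have h1 := Real.Gamma_pos_of_pos (show 0 < b / 2 by positivity)
  have h2 := Real.Gamma_pos_of_pos (show 0 < (b + 1) / 2 by positivity)
  show _ / _ < _ / _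
  apply lt_of_pow_lt_pow_left₀ 2 (by positivity)
  rw [mode_sq ha, mode_sq hb]
  have := auxH_lt (show 0 < a / 2 by positivity) (show a / 2 < b / 2 by linarith)
  gcongr
end

section
/- For every integer k ≥ 3, the map ν ↦ c_{ν,k} = Γ((ν+k)/2) / ((πν)^{k/2} Γ(ν/2)) is strictly monotonically decreasing on (0, ∞). -/
open Real Set

/-- Auxiliary squared ratio for `k = 3`. -/
noncomputable def auxG (x : ℝ) : ℝ := Real.Gamma (x + 3/2) ^ 2 / (x ^ 3 * Real.Gamma x ^ 2)

lemma gamma_mid_sq {x : ℝ} (hx : 0 < x) :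
    Real.Gamma (x + 1/2) ^ 2 ≤ Real.Gamma x * Real.Gamma (x + 1) := by
  have h := Real.Gamma_mul_add_mul_le_rpow_Gamma_mul_rpow_Gamma (s := x) (t := x + 1)
    (a := 1/2) (b := 1/2) hx (by linarith) (by norm_num) (by norm_num) (by norm_num)
  have e : (1/2 : ℝ) * x + 1/2 * (x + 1) = x + 1/2 := by ring
  have h1 := Real.Gamma_pos_of_pos hx
  have h2 := Real.Gamma_pos_of_pos (show 0 < x + 1 by linarith)
  have h3 := Real.Gamma_pos_of_pos (show 0 < x + 1/2 by linarith)
  rw [e, ← Real.sqrt_eq_rpow, ← Real.sqrt_eq_rpow] at h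
  calc Real.Gamma (x + 1/2) ^ 2 ≤ (√(Real.Gamma x) * √(Real.Gamma (x + 1))) ^ 2 := by gcongr
    _ = _ := by rw [mul_pow, Real.sq_sqrt h1.le, Real.sq_sqrt h2.le]

lemma auxG_pos {x : ℝ} (hx : 0 < x) : 0 < auxG x := by
  have h1 := Real.Gamma_pos_of_pos hx
  have h3 := Real.Gamma_pos_of_pos (show 0 < x + 3/2 by linarith)
  unfold auxG; positivity

lemma auxG_le {x : ℝ} (hx : 0 < x) : auxG x ≤ (x + 1) / x := by
  have h1 := Real.Gamma_pos_of_pos hx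
  have h := gamma_mid_sq (show 0 < x + 1 by linarith)
  rw [Real.Gamma_add_one (show x + 1 ≠ 0 by linarith), Real.Gamma_add_one hx.ne',
    show x + 1 + 1/2 = x + 3/2 by ring] at h
  unfold auxG
  rw [div_le_div_iff₀ (by positivity) hx]
  nlinarith [mul_le_mul_of_nonneg_right h hx.le]

lemma one_le_auxG {x : ℝ} (hx : 0 < x) : 1 ≤ auxG x := by
  have h1 := Real.Gamma_pos_of_pos hx
  have h2 := Real.Gamma_pos_of_pos (show 0 < x + 1/2 by linarith)
  have h := gamma_mid_sq (show 0 < x + 1/2 by linarith)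
  have e : Real.Gamma (x + 3/2) = (x + 1/2) * Real.Gamma (x + 1/2) := by
    rw [← Real.Gamma_add_one (by linarith)]; congr 1; ring
  rw [Real.Gamma_add_one (show x + 1/2 ≠ 0 by linarith),
    show x + 1/2 + 1/2 = x + 1 by ring, Real.Gamma_add_one hx.ne'] at h
  unfold auxG
  rw [one_le_div (by positivity), e]
  have h3 := mul_le_mul_of_nonneg_left h hx.le
  have h4 : 0 ≤ (x + 1/2) * Real.Gamma (x + 1/2) ^ 2 := by positivity
  nlinarith

lemma auxG_rec {x : ℝ} (hx : 0 < x) :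
    auxG x = (1 + (3/4 * x + 1) / (x * (x + 3/2) ^ 2)) * auxG (x + 1) := by
  have h1 := Real.Gamma_pos_of_pos hx
  have h3 := Real.Gamma_pos_of_pos (show 0 < x + 3/2 by linarith)
  unfold auxG
  rw [show x + 1 + 3/2 = (x + 3/2) + 1 by ring, Real.Gamma_add_one (show x + 3/2 ≠ 0 by linarith),
    Real.Gamma_add_one hx.ne']
  have : x + 3/2 ≠ 0 := by linarith
  have : x + 1 ≠ 0 := by linarith
  generalize Real.Gamma (x + 3/2) = A at *
  generalize hz : x + 3/2 = z at *
  field_simp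
  rw [← hz]
  ring

lemma auxR_lt {x y : ℝ} (hx : 0 < x) (hxy : x < y) :
    (3/4 * y + 1) / (y * (y + 3/2) ^ 2) < (3/4 * x + 1) / (x * (x + 3/2) ^ 2) := by
  have hy : 0 < y := hx.trans hxy
  have e : ∀ t : ℝ, 0 < t → (3/4 * t + 1) / (t * (t + 3/2) ^ 2)
      = (3/4 + 1 / t) * (1 / (t + 3/2) ^ 2) := by
    intro t ht; field_simp
  rw [e x hx, e y hy]
  gcongr

lemma auxG_ratio_step {x y : ℝ} (hx : 0 < x) (hxy : x < y) :
    auxG (x + 1) / auxG (y + 1) < auxG x / auxG y := by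
  have hy : 0 < y := hx.trans hxy
  have h1 := auxG_pos (show 0 < x + 1 by linarith)
  have h2 := auxG_pos (show 0 < y + 1 by linarith)
  have h := auxR_lt hx hxy
  have hp : 0 < (3/4 * y + 1) / (y * (y + 3/2) ^ 2) := by positivity
  rw [div_lt_div_iff₀ h2 (auxG_pos hy), auxG_rec hx, auxG_rec hy]
  have := mul_pos h1 h2
  nlinarith [mul_lt_mul_of_pos_right h this]

lemma auxG_ratio_iter {x y : ℝ} (hx : 0 < x) (hxy : x < y) (n : ℕ) :
    auxG (x + n) / auxG (y + n) ≤ auxG x / auxG y := by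
  induction n with
  | zero => simp
  | succ n ih =>
    have := auxG_ratio_step (x := x + n) (y := y + n) (by positivity) (by linarith)
    push_cast
    rw [← add_assoc, ← add_assoc]
    exact this.le.trans ih

lemma auxG_antitone {x y : ℝ} (hx : 0 < x) (hxy : x < y) : 1 ≤ auxG x / auxG y := by
  have hy : 0 < y := hx.trans hxy
  have hlim : Filter.Tendsto (fun n : ℕ => 1 - 1 / ((n : ℝ) + 1)) Filter.atTop (nhds (1 - 0)) :=
    tendsto_const_nhds.sub tendsto_one_div_add_atTop_nhds_zero_nat
  rw [sub_zero] at hlim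
  have hlim2 := hlim.comp (Filter.tendsto_add_atTop_nat 0)
  refine le_of_tendsto hlim (Filter.eventually_atTop.2 ⟨0, fun n _ => ?_⟩)
  have hyn : 0 < y + n := by positivity
  have hxn : 0 < x + (n + 1 : ℕ) := by positivity
  have hyn1 : 0 < y + (n + 1 : ℕ) := by positivity
  rcases Nat.eq_zero_or_pos n with rfl | hn
  · have := div_pos (auxG_pos hx) (auxG_pos hy)
    simpa using this.le
  refine le_trans ?_ (auxG_ratio_iter hx hxy n)
  have hn' : (0 : ℝ) < n := by exact_mod_cast hn
  have hxn' : 0 < x + n := by positivity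
  have a := one_le_auxG hxn'
  have b := auxG_le hyn
  rw [le_div_iff₀ (auxG_pos hyn)]
  refine le_trans ?_ a
  have hc : (y + n + 1) / (y + n) ≤ (n + 1) / n := by
    rw [div_le_div_iff₀ hyn hn']; nlinarith
  calc (1 - 1 / ((n : ℝ) + 1)) * auxG (y + n) ≤ (1 - 1 / ((n : ℝ) + 1)) * ((n + 1) / n) := by
        have : 0 ≤ 1 - 1 / ((n : ℝ) + 1) := by
          rw [sub_nonneg, div_le_one (by positivity)]; linarith
        exact mul_le_mul_of_nonneg_left (b.trans hc) this
    _ = 1 := by field_simp; ring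
    _ ≤ 1 := le_rfl

lemma auxG_strictAnti {x y : ℝ} (hx : 0 < x) (hxy : x < y) : auxG y < auxG x := by
  have hy : 0 < y := hx.trans hxy
  have h := (auxG_antitone (x := x + 1) (y := y + 1) (by linarith) (by linarith)).trans_lt
    (auxG_ratio_step hx hxy)
  rwa [one_lt_div (auxG_pos hy)] at h

/-- The value at the mode. -/
noncomputable def auxC (k : ℕ) (ν : ℝ) : ℝ := Real.Gamma ((ν + k) / 2) /
        ((Real.pi * ν) ^ ((k : ℝ) / 2) * Real.Gamma (ν / 2))

lemma auxC_pos (k : ℕ) {ν : ℝ} (h : 0 < ν) : 0 < auxC k ν := by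
  have h1 := Real.Gamma_pos_of_pos (show 0 < ν / 2 by positivity)
  have h2 := Real.Gamma_pos_of_pos (show 0 < (ν + k) / 2 by positivity)
  have := Real.pi_pos
  unfold auxC; positivity

lemma auxC_two {ν : ℝ} (h : 0 < ν) : auxC 2 ν = 1 / (2 * Real.pi) := by
  have h1 := Real.Gamma_pos_of_pos (show 0 < ν / 2 by positivity)
  have := Real.pi_pos
  unfold auxC
  rw [show (ν + (2 : ℕ)) / 2 = ν / 2 + 1 by push_cast; ring, Real.Gamma_add_one (by positivity),
    show ((2 : ℕ) : ℝ) / 2 = 1 by norm_num, Real.rpow_one]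
  field_simp

lemma auxC_three_sq {ν : ℝ} (h : 0 < ν) : auxC 3 ν ^ 2 = auxG (ν / 2) / (2 * Real.pi) ^ 3 := by
  have h1 := Real.Gamma_pos_of_pos (show 0 < ν / 2 by positivity)
  have := Real.pi_pos
  unfold auxC auxG
  have e : ((Real.pi * ν) ^ (((3 : ℕ) : ℝ) / 2)) ^ 2 = (Real.pi * ν) ^ 3 := by
    rw [← Real.rpow_natCast, ← Real.rpow_mul (by positivity), ← Real.rpow_natCast]
    norm_num
  rw [div_pow, mul_pow, e, show (ν + (3 : ℕ)) / 2 = ν / 2 + 3 / 2 by push_cast; ring]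
  field_simp

lemma auxC_step (k : ℕ) {ν : ℝ} (h : 0 < ν) :
    auxC (k + 2) ν = auxC k ν * ((1 + k / ν) / (2 * Real.pi)) := by
  have h1 := Real.Gamma_pos_of_pos (show 0 < ν / 2 by positivity)
  have := Real.pi_pos
  unfold auxC
  rw [show (ν + (k + 2 : ℕ)) / 2 = (ν + k) / 2 + 1 by push_cast; ring,
    Real.Gamma_add_one (by positivity),
    show ((k + 2 : ℕ) : ℝ) / 2 = (k : ℝ) / 2 + 1 by push_cast; ring,
    Real.rpow_add (by positivity), Real.rpow_one]
  field_simp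

lemma auxC_strict_step (k : ℕ) (hk : 0 < k) {x y : ℝ} (hx : 0 < x) (hxy : x < y)
    (h : auxC k y ≤ auxC k x) : auxC (k + 2) y < auxC (k + 2) x := by
  have hy : 0 < y := hx.trans hxy
  have := Real.pi_pos
  have hk' : (0 : ℝ) < k := by exact_mod_cast hk
  rw [auxC_step k hx, auxC_step k hy]
  refine mul_lt_mul' h ?_ (by positivity) (auxC_pos k hx)
  gcongr

lemma auxC_three {x y : ℝ} (hx : 0 < x) (hxy : x < y) : auxC 3 y < auxC 3 x := by
  have hy : 0 < y := hx.trans hxy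
  have := Real.pi_pos
  refine lt_of_pow_lt_pow_left₀ 2 (auxC_pos 3 hx).le ?_
  rw [auxC_three_sq hx, auxC_three_sq hy]
  have := auxG_strictAnti (x := x / 2) (y := y / 2) (by positivity) (by linarith)
  gcongr

lemma auxC_all {x y : ℝ} (hx : 0 < x) (hxy : x < y) (m : ℕ) :
    auxC (m + 3) y < auxC (m + 3) x ∧ auxC (m + 4) y < auxC (m + 4) x := by
  induction m with
  | zero =>
    refine ⟨auxC_three hx hxy, auxC_strict_step 2 (by norm_num) hx hxy ?_⟩
    rw [auxC_two hx, auxC_two (hx.trans hxy)]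
  | succ m ih =>
    have e : m + 1 + 3 = m + 4 := by ring
    rw [e]
    exact ⟨ih.2, auxC_strict_step (m + 3) (by omega) hx hxy ih.1.le⟩

/-- For every integer `k ≥ 3`, the Student t value at the mode
`ν ↦ c_{ν,k} = Γ((ν+k)/2) / ((πν)^{k/2} Γ(ν/2))`
is strictly monotonically decreasing on `(0, ∞)`. -/
theorem studentT_mode_strictAntiOn_of_three_le (k : ℕ) (hk : 3 ≤ k) :
    StrictAntiOn
      (fun ν : ℝ => Real.Gamma ((ν + k) / 2) /
        ((Real.pi * ν) ^ ((k : ℝ) / 2) * Real.Gamma (ν / 2)))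
      (Set.Ioi (0 : ℝ)) := by
  intro x hx y _ hxy
  obtain ⟨m, rfl⟩ := Nat.exists_eq_add_of_le' hk
  exact (auxC_all hx hxy m).1
end

section
/- For every integer k ≥ 3 and every ν > 0, c_{ν,k} > (2π)^{-k/2}; that is, in dimensions k ≥ 3 the Student t value at the mode strictly exceeds the Gaussian value at the mode for every finite ν. -/
open Real

lemma gamma_weak (x a : ℝ) (hx : 0 < x) (ha : 1 < a) :
    x ^ a * Real.Gamma x ≤ Real.Gamma (x + a) := by
  have hG : 0 < Real.Gamma x := Real.Gamma_pos_of_pos hx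
  have hGa : 0 < Real.Gamma (x + a) := Real.Gamma_pos_of_pos (by linarith)
  have ha0 : a ≠ 0 := by linarith
  have h1 : a⁻¹ < 1 := inv_lt_one_of_one_lt₀ ha
  have h := Real.Gamma_mul_add_mul_le_rpow_Gamma_mul_rpow_Gamma hx
    (show 0 < x + a by linarith) (show 0 < 1 - a⁻¹ by linarith)
    (show 0 < a⁻¹ by positivity) (by ring)
  have e : (1 - a⁻¹) * x + a⁻¹ * (x + a) = x + 1 := by
    field_simp
    ring
  rw [e, Real.Gamma_add_one hx.ne'] at h
  have h2 := Real.rpow_le_rpow (by positivity) h (show 0 ≤ a by linarith)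
  rw [Real.mul_rpow hx.le hG.le, Real.mul_rpow (by positivity) (by positivity),
    ← Real.rpow_mul hG.le, ← Real.rpow_mul hGa.le, inv_mul_cancel₀ ha0, Real.rpow_one,
    show (1 - a⁻¹) * a = a - 1 by field_simp] at h2
  have h3 : Real.Gamma x ^ a = Real.Gamma x ^ (a - 1) * Real.Gamma x := by
    rw [Real.rpow_sub_one hG.ne']
    field_simp
  rw [h3] at h2
  have h4 : 0 < Real.Gamma x ^ (a - 1) := by positivity
  refine le_of_mul_le_mul_left ?_ h4
  linarith

lemma gamma_strict (x a : ℝ) (hx : 0 < x) (ha : 1 < a) :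
    x ^ a * Real.Gamma x < Real.Gamma (x + a) := by
  have hG : 0 < Real.Gamma x := Real.Gamma_pos_of_pos hx
  have h := gamma_weak (x + 1) a (by linarith) ha
  have hxa : 0 < x + a := by linarith
  rw [Real.Gamma_add_one hx.ne', show x + 1 + a = x + a + 1 by ring,
    Real.Gamma_add_one hxa.ne'] at h
  have hxi : 0 < x⁻¹ := by positivity
  have hb := one_add_mul_self_lt_rpow_one_add (s := x⁻¹) (by linarith) hxi.ne' ha
  have e : (x + 1) ^ a = x ^ a * (1 + x⁻¹) ^ a := by
    rw [← Real.mul_rpow hx.le (by positivity)]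
    congr 1
    field_simp
  have hp : 0 < x ^ a * (x * Real.Gamma x) := by positivity
  have h5 := mul_lt_mul_of_pos_left hb hp
  have e2 : x ^ a * (x * Real.Gamma x) * (1 + a * x⁻¹)
      = (x + a) * (x ^ a * Real.Gamma x) := by
    field_simp
  rw [e2] at h5
  rw [e] at h
  refine lt_of_mul_lt_mul_left ?_ hxa.le
  linarith

/-- In dimensions `k ≥ 3`, the Student t value at the mode strictly exceeds the
Gaussian value at the mode for every finite `ν > 0`: `c_{ν,k} > (2π)^{-k/2}`. -/
theorem studentT_mode_gt_gaussian_mode_of_three_le (k : ℕ) (hk : 3 ≤ k)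
    (ν : ℝ) (hν : 0 < ν) :
    Real.Gamma ((ν + k) / 2) /
        ((Real.pi * ν) ^ ((k : ℝ) / 2) * Real.Gamma (ν / 2)) >
      (2 * Real.pi) ^ (-(k : ℝ) / 2) := by
  have hk' : (3 : ℝ) ≤ k := by exact_mod_cast hk
  have hpi := Real.pi_pos
  have h := gamma_strict (ν / 2) ((k : ℝ) / 2) (by linarith) (by linarith)
  have hG : 0 < Real.Gamma (ν / 2) := Real.Gamma_pos_of_pos (by linarith)
  rw [gt_iff_lt, lt_div_iff₀ (by positivity), add_div]
  have e : (Real.pi * ν) ^ ((k : ℝ) / 2)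
      = (2 * Real.pi) ^ ((k : ℝ) / 2) * (ν / 2) ^ ((k : ℝ) / 2) := by
    rw [← Real.mul_rpow (by positivity) (by positivity)]
    congr 1
    ring
  have hq : 0 < (2 * Real.pi) ^ ((k : ℝ) / 2) := by positivity
  rw [e, neg_div, Real.rpow_neg (by positivity), mul_assoc, inv_mul_cancel_left₀ hq.ne']
  exact h
end

section
/- For every ν > 0, ψ((ν+3)/2) − ψ(ν/2) − 3/ν ≤ −1/(ν(ν+1)) < 0, where ψ is the digamma function; consequently the derivative of ν ↦ log c_{ν,3} is at most −1/(2ν(ν+1)) and is strictly negative. -/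
open Real

/-- The digamma function: the derivative of `x ↦ log Γ(x)`. -/
noncomputable def digamma (x : ℝ) : ℝ :=
  deriv (fun y : ℝ => Real.log (Real.Gamma y)) x

lemma lg_diff (x : ℝ) (hx : 0 < x) :
    DifferentiableAt ℝ (fun y : ℝ => Real.log (Real.Gamma y)) x := by
  refine DifferentiableAt.log (Real.differentiableAt_Gamma ?_) (Real.Gamma_pos_of_pos hx).ne'
  intro m
  have : (0 : ℝ) ≤ m := Nat.cast_nonneg m
  linarith

lemma lg_hasDeriv (x : ℝ) (hx : 0 < x) :
    HasDerivAt (fun y : ℝ => Real.log (Real.Gamma y)) (digamma x) x :=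
  (lg_diff x hx).hasDerivAt

lemma digamma_rec (x : ℝ) (hx : 0 < x) : digamma (x + 1) = digamma x + 1 / x := by
  have h1 : HasDerivAt (fun y : ℝ => Real.log (Real.Gamma (y + 1))) (digamma (x + 1)) x :=
    HasDerivAt.comp_add_const x 1 (lg_hasDeriv (x + 1) (by linarith))
  have h2 : HasDerivAt (fun y : ℝ => Real.log (Real.Gamma y) + Real.log y)
      (digamma x + 1 / x) x := by
    rw [one_div]
    exact (lg_hasDeriv x hx).add (Real.hasDerivAt_log hx.ne')
  refine h1.unique (h2.congr_of_eventuallyEq ?_)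
  filter_upwards [lt_mem_nhds hx] with y hy
  rw [Real.Gamma_add_one hy.ne', Real.log_mul hy.ne' (Real.Gamma_pos_of_pos hy).ne', add_comm]

lemma digamma_mono {x y : ℝ} (hx : 0 < x) (hxy : x < y) : digamma x ≤ digamma y := by
  have hc : ConvexOn ℝ (Set.Ioi 0) (fun y : ℝ => Real.log (Real.Gamma y)) :=
    Real.convexOn_log_Gamma
  exact (hc.le_slope_of_hasDerivAt hx (hx.trans hxy) hxy (lg_hasDeriv x hx)).trans
    (hc.slope_le_of_hasDerivAt hx (hx.trans hxy) hxy (lg_hasDeriv y (hx.trans hxy)))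

lemma step_bound (y : ℝ) (hy : 0 < y) :
    digamma (y + 1 + 1 / 2) - digamma (y + 1) - 1 / (2 * (y + 1)) ≤
      digamma (y + 1 / 2) - digamma y - 1 / (2 * y) := by
  have e : y + 1 + 1 / 2 = (y + 1 / 2) + 1 := by ring
  rw [e, digamma_rec _ (by linarith : (0 : ℝ) < y + 1 / 2), digamma_rec y hy]
  have : 1 / (y + 1 / 2) - 1 / y - 1 / (2 * (y + 1)) + 1 / (2 * y) =
      - (1 / (2 * y * (y + 1) * (2 * y + 1))) := by
    have : 2 * y + 1 ≠ 0 := by positivity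
    have : y + 1 / 2 ≠ 0 := by positivity
    field_simp
    ring
  have : 0 < 1 / (2 * y * (y + 1) * (2 * y + 1)) := by positivity
  linarith

lemma iter_bound (n : ℕ) (y : ℝ) (hy : 0 < y) :
    -(1 / (2 * (y + n))) ≤ digamma (y + 1 / 2) - digamma y - 1 / (2 * y) := by
  induction n generalizing y with
  | zero =>
    have := digamma_mono hy (by linarith : y < y + 1 / 2)
    simp only [Nat.cast_zero, add_zero]
    linarith
  | succ n ih =>
    have h := (ih (y + 1) (by linarith)).trans (step_bound y hy)
    have e : y + ((n + 1 : ℕ) : ℝ) = y + 1 + n := by push_cast; ring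
    rwa [e]

lemma half_bound (y : ℝ) (hy : 0 < y) :
    1 / (2 * y) ≤ digamma (y + 1 / 2) - digamma y := by
  have key : 0 ≤ digamma (y + 1 / 2) - digamma y - 1 / (2 * y) := by
    by_contra! hneg
    set g := digamma (y + 1 / 2) - digamma y - 1 / (2 * y) with hg
    obtain ⟨n, hn⟩ := exists_nat_gt (1 / (-g))
    have h := iter_bound n y hy
    rw [← hg] at h
    have hg' : 0 < -g := by linarith
    have hn0 : (0 : ℝ) < n := lt_trans (by positivity) hn
    rw [div_lt_iff₀ hg'] at hn
    have h2 : -g ≤ 1 / (2 * (y + n)) := by linarith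
    rw [le_div_iff₀ (by positivity)] at h2
    nlinarith [mul_pos hg' hy]
  linarith

lemma main_bound (ν : ℝ) (hν : 0 < ν) :
    digamma ((ν + 3) / 2) - digamma (ν / 2) - 3 / ν ≤ -(1 / (ν * (ν + 1))) := by
  have h1 := digamma_rec ((ν + 1) / 2) (by positivity)
  have h2 := digamma_rec (ν / 2) (by positivity)
  have h3 := half_bound ((ν + 1) / 2) (by positivity)
  rw [show (ν + 1) / 2 + 1 = (ν + 3) / 2 by ring] at h1
  rw [show (ν + 1) / 2 + 1 / 2 = ν / 2 + 1 by ring] at h3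
  have e : 1 / ((ν + 1) / 2) + 1 / (ν / 2) - 1 / (2 * ((ν + 1) / 2)) - 3 / ν =
      -(1 / (ν * (ν + 1))) := by
    field_simp
    ring
  linarith

lemma deriv_formula (ν : ℝ) (hν : 0 < ν) :
    deriv (fun t : ℝ => Real.log (Real.Gamma ((t + 3) / 2) /
          ((Real.pi * t) ^ ((3 : ℝ) / 2) * Real.Gamma (t / 2)))) ν =
      (digamma ((ν + 3) / 2) - digamma (ν / 2) - 3 / ν) / 2 := by
  have a1 : HasDerivAt (fun t : ℝ => (t + 3) / 2) (1 / 2) ν :=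
    ((hasDerivAt_id' ν).add_const 3).div_const 2
  have a2 : HasDerivAt (fun t : ℝ => t / 2) (1 / 2) ν := (hasDerivAt_id' ν).div_const 2
  have b1 : HasDerivAt (fun t : ℝ => Real.log (Real.Gamma ((t + 3) / 2)))
      (digamma ((ν + 3) / 2) * (1 / 2)) ν :=
    HasDerivAt.comp (h₂ := fun y : ℝ => Real.log (Real.Gamma y)) ν (lg_hasDeriv ((ν + 3) / 2) (by positivity)) a1
  have b2 : HasDerivAt (fun t : ℝ => Real.log (Real.Gamma (t / 2)))
      (digamma (ν / 2) * (1 / 2)) ν :=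
    HasDerivAt.comp (h₂ := fun y : ℝ => Real.log (Real.Gamma y)) ν (lg_hasDeriv (ν / 2) (by positivity)) a2
  have b3 : HasDerivAt (fun t : ℝ => (3 : ℝ) / 2 * (Real.log Real.pi + Real.log t))
      ((3 : ℝ) / 2 * ν⁻¹) ν :=
    ((Real.hasDerivAt_log hν.ne').const_add _).const_mul _
  have b := b1.sub (b3.add b2)
  have c := b.congr_of_eventuallyEq (f₁ := fun t : ℝ => Real.log (Real.Gamma ((t + 3) / 2) /
          ((Real.pi * t) ^ ((3 : ℝ) / 2) * Real.Gamma (t / 2)))) (by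
    filter_upwards [lt_mem_nhds hν] with t ht
    have p1 : 0 < Real.Gamma ((t + 3) / 2) := Real.Gamma_pos_of_pos (by positivity)
    have p2 : 0 < Real.Gamma (t / 2) := Real.Gamma_pos_of_pos (by positivity)
    have p3 : 0 < Real.pi * t := by positivity
    have p4 : 0 < (Real.pi * t) ^ ((3 : ℝ) / 2) := Real.rpow_pos_of_pos p3 _
    rw [Real.log_div p1.ne' (mul_pos p4 p2).ne', Real.log_mul p4.ne' p2.ne',
      Real.log_rpow p3, Real.log_mul Real.pi_pos.ne' ht.ne']
    rfl)
  rw [c.deriv]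
  field_simp
  ring

/-- For every `ν > 0`, `ψ((ν+3)/2) − ψ(ν/2) − 3/ν ≤ −1/(ν(ν+1)) < 0`;
consequently the derivative of `ν ↦ log c_{ν,3}` is at most `−1/(2ν(ν+1))` and
is strictly negative. -/
theorem digamma_dim_three_bound (ν : ℝ) (hν : 0 < ν) :
    (digamma ((ν + 3) / 2) - digamma (ν / 2) - 3 / ν ≤ -(1 / (ν * (ν + 1))) ∧
      -(1 / (ν * (ν + 1))) < 0) ∧
    (deriv (fun t : ℝ => Real.log (Real.Gamma ((t + 3) / 2) /
          ((Real.pi * t) ^ ((3 : ℝ) / 2) * Real.Gamma (t / 2)))) ν ≤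
        -(1 / (2 * ν * (ν + 1))) ∧
      deriv (fun t : ℝ => Real.log (Real.Gamma ((t + 3) / 2) /
          ((Real.pi * t) ^ ((3 : ℝ) / 2) * Real.Gamma (t / 2)))) ν < 0) := by
  have hm := main_bound ν hν
  have hp : 0 < 1 / (ν * (ν + 1)) := by positivity
  have e : 1 / (2 * ν * (ν + 1)) = 1 / (ν * (ν + 1)) / 2 := by
    field_simp
  rw [deriv_formula ν hν, e]
  refine ⟨⟨hm, by linarith⟩, by linarith, by linarith⟩
end

section
/- Let k ≥ 1 be an integer, let ν₁, ν₂ > 0, and let 0 ≤ m < min(ν₁, ν₂). Then the ratio of m-th absolute moments of the k-variate Student t distributions with ν₁ and ν₂ degrees of freedom equals (ν₁/ν₂)^{m/2} Γ((ν₁−m)/2) Γ(ν₂/2) / (Γ((ν₂−m)/2) Γ(ν₁/2)); in particular, this ratio (∫_{ℝ^k} ‖x‖^m f_{ν₁}^k(x) dx) / (∫_{ℝ^k} ‖x‖^m f_{ν₂}^k(x) dx) does not depend on the dimension k. -/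
open Real MeasureTheory
open Set in
lemma img (ν : ℝ) (hν : 0 < ν) : (fun r : ℝ => r^2/(ν+r^2)) '' Ioi 0 = Ioo 0 1 := by
  ext x
  simp only [mem_image, mem_Ioi, mem_Ioo]
  constructor
  · rintro ⟨r, hr, rfl⟩
    refine ⟨by positivity, ?_⟩
    rw [div_lt_one (by positivity)]; linarith
  · rintro ⟨h0, h1⟩
    have h2 : 0 < 1 - x := by linarith
    refine ⟨√(ν * x / (1-x)), by positivity, ?_⟩
    rw [Real.sq_sqrt (by positivity)]
    field_simp
    ring

open Set in
lemma radial (ν a b : ℝ) (hν : 0 < ν) (ha : 0 < a) (hb : 0 < b) :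
    ∫ r in Ioi (0:ℝ), r^(2*a-1) * (1 + r^2/ν)^(-(a+b)) =
      ν^a / 2 * (Gamma a * Gamma b / Gamma (a+b)) := by
  have hB := ProbabilityTheory.beta_eq_betaIntegralReal a b ha hb
  have hB2 : ProbabilityTheory.beta a b = ∫ x in Ioo (0:ℝ) 1, x^(a-1) * (1-x)^(b-1) := by
    rw [hB, Complex.betaIntegral, intervalIntegral.integral_of_le (by norm_num),
      ← integral_Ioc_eq_integral_Ioo, ← Complex.ofReal_re (∫ x in Ioc (0:ℝ) 1, x^(a-1) * (1-x)^(b-1)),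
      ← integral_complex_ofReal]
    congr 1
    refine setIntegral_congr_fun measurableSet_Ioc fun x hx => ?_
    have h1 : 0 ≤ 1 - x := by linarith [hx.2]
    push_cast [Complex.ofReal_cpow hx.1.le, Complex.ofReal_cpow h1]
    rfl
  have hd : ∀ r ∈ Ioi (0:ℝ), HasDerivWithinAt (fun r : ℝ => r^2/(ν+r^2))
      (2*r*ν/(ν+r^2)^2) (Ioi 0) r := by
    intro r hr
    have hp : ν + r^2 ≠ 0 := by positivity
    have := ((hasDerivAt_pow 2 r).div ((hasDerivAt_pow 2 r).const_add ν) hp).hasDerivWithinAt (s := Ioi 0)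
    refine this.congr_deriv ?_
    push_cast
    field_simp
    ring
  have hinj : InjOn (fun r : ℝ => r^2/(ν+r^2)) (Ioi 0) := by
    intro r hr s hs h
    have hr' : (0:ℝ) < r := hr
    have hs' : (0:ℝ) < s := hs
    simp only [] at h
    rw [div_eq_div_iff (by positivity) (by positivity)] at h
    have : ν * r^2 = ν * s^2 := by linarith
    have := mul_left_cancel₀ hν.ne' this
    exact (pow_left_inj₀ hr'.le hs'.le two_ne_zero).1 this
  have key := integral_image_eq_integral_abs_deriv_smul measurableSet_Ioi hd hinj
    (fun x => x^(a-1) * (1-x)^(b-1))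
  rw [img ν hν, ← hB2] at key
  have e : ∫ r in Ioi (0:ℝ), |2*r*ν/(ν+r^2)^2| • ((r^2/(ν+r^2))^(a-1) * (1-r^2/(ν+r^2))^(b-1))
     = ∫ r in Ioi (0:ℝ), (2 * ν^(-a)) * (r^(2*a-1) * (1 + r^2/ν)^(-(a+b))) := by
    refine setIntegral_congr_fun measurableSet_Ioi fun r hr => ?_
    have hr' : (0:ℝ) < r := hr
    have hp : 0 < ν + r^2 := by positivity
    have e1 : 1-r^2/(ν+r^2) = ν/(ν+r^2) := by field_simp; ring
    have e2 : 1 + r^2/ν = (ν+r^2)/ν := by field_simp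
    simp only [smul_eq_mul]
    rw [abs_of_nonneg (by positivity), e1, e2, div_rpow (by positivity) hp.le,
      div_rpow hν.le hp.le, div_rpow hp.le hν.le, ← rpow_natCast r 2, ← rpow_mul hr'.le]
    have f1 : r ^ (((2:ℕ):ℝ)*(a-1)) = r^(2*a-1) / r := by
      rw [← rpow_sub_one hr'.ne']; congr 1; push_cast; ring
    rw [f1, rpow_natCast, rpow_neg hν.le, rpow_neg hp.le, rpow_neg hν.le, rpow_add hp, rpow_add hν,
      rpow_sub_one hp.ne', rpow_sub_one hp.ne', rpow_sub_one hν.ne']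
    have := rpow_pos_of_pos hν a
    have := rpow_pos_of_pos hν b
    have := rpow_pos_of_pos hp a
    have := rpow_pos_of_pos hp b
    field_simp
  rw [e, integral_const_mul, rpow_neg hν.le, ProbabilityTheory.beta] at key
  rw [key]
  have := rpow_pos_of_pos hν a
  field_simp

lemma moment (k : ℕ) (hk : 1 ≤ k) (ν m : ℝ) (hν : 0 < ν) (hm : 0 ≤ m) (hmν : m < ν) :
    ∫ x : EuclideanSpace ℝ (Fin k),
        ‖x‖ ^ m *
          (Real.Gamma ((ν + k) / 2) /
              ((Real.pi * ν) ^ ((k : ℝ) / 2) * Real.Gamma (ν / 2)) *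
            (1 + ‖x‖ ^ 2 / ν) ^ (-(ν + k) / 2)) =
    (k * volume.real (Metric.ball (0 : EuclideanSpace ℝ (Fin k)) 1) / π^((k:ℝ)/2) / 2
      * Gamma ((m+k)/2)) * (ν^(m/2) * Gamma ((ν-m)/2) / Gamma (ν/2)) := by
  have : Nonempty (Fin k) := ⟨⟨0, hk⟩⟩
  have hk' : (0:ℝ) < k := by exact_mod_cast hk
  rw [integral_fun_norm_addHaar volume (fun r : ℝ => r ^ m *
          (Real.Gamma ((ν + k) / 2) /
              ((Real.pi * ν) ^ ((k : ℝ) / 2) * Real.Gamma (ν / 2)) *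
            (1 + r ^ 2 / ν) ^ (-(ν + k) / 2)))]
  have e : ∫ r in Set.Ioi (0:ℝ), r ^ (Module.finrank ℝ (EuclideanSpace ℝ (Fin k)) - 1) • (r ^ m *
          (Real.Gamma ((ν + k) / 2) /
              ((Real.pi * ν) ^ ((k : ℝ) / 2) * Real.Gamma (ν / 2)) *
            (1 + r ^ 2 / ν) ^ (-(ν + k) / 2))) = 
      ∫ r in Set.Ioi (0:ℝ), (Real.Gamma ((ν + k) / 2) /
              ((Real.pi * ν) ^ ((k : ℝ) / 2) * Real.Gamma (ν / 2))) *
        (r ^ (2*((m+k)/2)-1) * (1 + r ^ 2 / ν) ^ (-((m+k)/2+(ν-m)/2))) := by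
    refine setIntegral_congr_fun measurableSet_Ioi fun r hr => ?_
    have hr' : (0:ℝ) < r := hr
    simp only [smul_eq_mul, finrank_euclideanSpace, Fintype.card_fin]
    have e1 : r ^ (2*((m+k)/2)-1) = r^(k-1) * r^m := by
      rw [← rpow_natCast, ← rpow_add hr']
      congr 1
      push_cast [hk]
      ring
    have e2 : -((m+k)/2+(ν-m)/2) = -(ν + k) / 2 := by ring
    rw [e1, e2]
    ring
  rw [e, integral_const_mul, radial ν _ _ hν (by positivity) (by linarith)]
  have e3 : (m+k)/2+(ν-m)/2 = (ν + k) / 2 := by ring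
  have e4 : ν^((m+k)/2) = ν^(m/2) * ν^((k:ℝ)/2) := by
    rw [← rpow_add hν]; congr 1; ring
  have g1 : 0 < Gamma ((ν+k)/2) := Gamma_pos_of_pos (by positivity)
  have g2 : 0 < Gamma (ν/2) := Gamma_pos_of_pos (by positivity)
  rw [e3, e4, mul_rpow pi_pos.le hν.le]
  simp only [smul_eq_mul, nsmul_eq_mul, finrank_euclideanSpace, Fintype.card_fin]
  have := rpow_pos_of_pos hν ((k:ℝ)/2)
  have := rpow_pos_of_pos pi_pos ((k:ℝ)/2)
  field_simp


/-- For every integer `k ≥ 1`, `ν₁, ν₂ > 0` and `0 ≤ m < min(ν₁, ν₂)`, the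
ratio of the `m`-th absolute moments of the `k`-variate Student t distributions
with `ν₁` and `ν₂` degrees of freedom equals
`(ν₁/ν₂)^{m/2} Γ((ν₁−m)/2) Γ(ν₂/2) / (Γ((ν₂−m)/2) Γ(ν₁/2))`,
which does not depend on the dimension `k`. -/
theorem studentT_moment_ratio (k : ℕ) (hk : 1 ≤ k) (ν₁ ν₂ m : ℝ)
    (hν₁ : 0 < ν₁) (hν₂ : 0 < ν₂) (hm : 0 ≤ m) (hmν : m < min ν₁ ν₂) :
    (∫ x : EuclideanSpace ℝ (Fin k),
        ‖x‖ ^ m *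
          (Real.Gamma ((ν₁ + k) / 2) /
              ((Real.pi * ν₁) ^ ((k : ℝ) / 2) * Real.Gamma (ν₁ / 2)) *
            (1 + ‖x‖ ^ 2 / ν₁) ^ (-(ν₁ + k) / 2))) /
      (∫ x : EuclideanSpace ℝ (Fin k),
        ‖x‖ ^ m *
          (Real.Gamma ((ν₂ + k) / 2) /
              ((Real.pi * ν₂) ^ ((k : ℝ) / 2) * Real.Gamma (ν₂ / 2)) *
            (1 + ‖x‖ ^ 2 / ν₂) ^ (-(ν₂ + k) / 2))) =
      (ν₁ / ν₂) ^ (m / 2) *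
        (Real.Gamma ((ν₁ - m) / 2) * Real.Gamma (ν₂ / 2)) /
        (Real.Gamma ((ν₂ - m) / 2) * Real.Gamma (ν₁ / 2)) := by

  have h1 : m < ν₁ := lt_of_lt_of_le hmν (min_le_left _ _)
  have h2 : m < ν₂ := lt_of_lt_of_le hmν (min_le_right _ _)
  rw [moment k hk ν₁ m hν₁ hm h1, moment k hk ν₂ m hν₂ hm h2, div_rpow hν₁.le hν₂.le]
  have hk' : (0:ℝ) < k := by exact_mod_cast hk
  have hv : 0 < volume.real (Metric.ball (0 : EuclideanSpace ℝ (Fin k)) 1) :=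
    ENNReal.toReal_pos (Metric.measure_ball_pos _ _ one_pos).ne' measure_ball_lt_top.ne
  have hG : 0 < Gamma ((m+k)/2) := Gamma_pos_of_pos (by positivity)
  have g1 : 0 < Gamma (ν₁/2) := Gamma_pos_of_pos (by positivity)
  have g2 : 0 < Gamma (ν₂/2) := Gamma_pos_of_pos (by positivity)
  have g3 : 0 < Gamma ((ν₂-m)/2) := Gamma_pos_of_pos (by linarith)
  have p1 := rpow_pos_of_pos pi_pos ((k:ℝ)/2)
  have p2 := rpow_pos_of_pos hν₂ (m/2)
  rw [mul_div_mul_left _ _ (by positivity)]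
  field_simp
end
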